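/- arXiv:1703.04243 — 2 statements merged into one kernel-verified Lean document; each statement's English description precedes it below -/
import Mathlib

section
/- Let α = β with α > −1 and α ≠ −1/2, and let n ≥ 0 be an integer. Then for 0 ≤ k ≤ n: if n − k is even, d_{k,n} = 2^{2α} Γ(n+α+1) Γ((k+n+1)/2 + α) Γ((n−k+1)/2 + α) / (√π Γ(n+2α+1) Γ((k+n)/2 + 1) Γ((n−k)/2 + 1) Γ(α + 1/2)); and if n − k is odd, d_{k,n} = 0. -/
open Finset

/-- Pochhammer symbol `(a)_j = a (a+1) ⋯ (a+j-1)`. -/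
noncomputable def poch (a : ℝ) (j : ℕ) : ℝ := ∏ i ∈ Finset.range j, (a + i)

/-- Generalized binomial coefficient `binom(a, m) = a (a-1) ⋯ (a-m+1) / m!`. -/
noncomputable def gbinom (a : ℝ) (m : ℕ) : ℝ :=
  (∏ i ∈ Finset.range m, (a - i)) / (Nat.factorial m)

/-- Jacobi polynomial `P_n^{(α,β)}(x)` of a real variable. -/
noncomputable def jacobiP (α β : ℝ) (n : ℕ) (x : ℝ) : ℝ :=
  (1 / 2 ^ n) * ∑ k ∈ Finset.range (n + 1),
    gbinom ((n : ℝ) + α) (n - k) * gbinom ((n : ℝ) + β) k * (x - 1) ^ k * (x + 1) ^ (n - k)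

/-- Jacobi polynomial `P_n^{(α,β)}(z)` of a complex variable. -/
noncomputable def jacobiC (α β : ℝ) (n : ℕ) (z : ℂ) : ℂ :=
  (1 / 2 ^ n) * ∑ k ∈ Finset.range (n + 1),
    ((gbinom ((n : ℝ) + α) (n - k) * gbinom ((n : ℝ) + β) k : ℝ) : ℂ) *
      (z - 1) ^ k * (z + 1) ^ (n - k)

/-- Chebyshev-connection coefficients `d_{k,n}`, given by a terminating ₃F₂ sum. -/
noncomputable def dCoeff (α β : ℝ) (n k : ℕ) : ℝ :=
  (poch ((n : ℝ) + α + β + 1) k * poch ((k : ℝ) + α + 1) (n - k)) /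
      ((Nat.factorial (n - k)) * 2 ^ (2 * k) * (Nat.factorial k)) *
    ∑ j ∈ Finset.range (n - k + 1),
      (poch ((k : ℝ) - n) j * poch ((n : ℝ) + k + α + β + 1) j * poch ((k : ℝ) + 1 / 2) j) /
        (poch ((k : ℝ) + α + 1) j * poch (2 * (k : ℝ) + 1) j * (Nat.factorial j))

/-- The Bernstein ellipse `E_ρ`: the set of points `z = (u + u⁻¹)/2` with `|u| = ρ`. -/
def bernsteinEllipse (ρ : ℝ) : Set ℂ :=
  {z : ℂ | ∃ u : ℂ, ‖u‖ = ρ ∧ z = (u + u⁻¹) / 2}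

/-!
For `α = β` the sum defining `d_{k,n}` is `₃F₂(-m, m + 2ν, c; ν + 1/2, 2c; 1)` with `m = n - k`,
`c = k + 1/2` and `ν = k + α + 1/2`, a terminating instance of Watson's theorem. Zeilberger's
method of creative telescoping expresses its value at `m + 2` as an explicit multiple of its value
at `m`. As the value is `1` at `m = 0` and `0` at `m = 1`, it is a quotient of Pochhammer symbols
for even `m` and `0` for odd `m`. Rewriting the Pochhammer symbols as quotients of Gamma values,
Legendre's duplication formula turns `Γ(k + n + 2α + 1)` into the remaining Gamma factors.
-/

section Pochhammer

theorem poch_eq_eval_ascPochhammer (a : ℝ) (j : ℕ) : poch a j = (ascPochhammer ℝ j).eval a := by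
  induction j with
  | zero => simp [poch]
  | succ j ih => rw [ascPochhammer_succ_eval, ← ih, poch, prod_range_succ, poch]

@[simp]
theorem poch_zero (a : ℝ) : poch a 0 = 1 := by
  simp [poch]

theorem poch_succ (a : ℝ) (j : ℕ) : poch a (j + 1) = poch a j * (a + j) :=
  prod_range_succ _ _

theorem poch_succ_left (a : ℝ) (j : ℕ) : poch a (j + 1) = a * poch (a + 1) j := by
  simp only [poch, prod_range_succ', Nat.cast_succ, Nat.cast_zero, add_zero, mul_comm a,
    add_assoc, add_comm (1 : ℝ)]

theorem mul_add_one_mul_poch_add_two (a : ℝ) (j : ℕ) :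
    a * (a + 1) * poch (a + 2) j = (a + j) * (a + j + 1) * poch a j :=
  calc a * (a + 1) * poch (a + 2) j = a * ((a + 1) * poch (a + 1 + 1) j) := by ring_nf
    _ = poch a (j + 2) := by rw [← poch_succ_left, ← poch_succ_left]
    _ = (a + j) * (a + j + 1) * poch a j := by rw [poch_succ, poch_succ]; push_cast; ring

theorem poch_ne_zero {a : ℝ} (ha : ∀ i : ℕ, a + i ≠ 0) (j : ℕ) : poch a j ≠ 0 :=
  prod_ne_zero_iff.mpr fun i _ ↦ ha i

theorem poch_neg_natCast_of_lt {m j : ℕ} (h : m < j) : poch (-(m : ℝ)) j = 0 := by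
  rw [poch_eq_eval_ascPochhammer, ascPochhammer_eval_neg_coe_nat_of_lt h]

theorem factorial_mul_poch_natCast_add_one (k p : ℕ) :
    (k.factorial : ℝ) * poch (k + 1) p = (k + p).factorial := by
  rw [poch_eq_eval_ascPochhammer, factorial_mul_ascPochhammer]

theorem poch_one_half_mul_four_pow_mul_factorial (p : ℕ) :
    poch (1 / 2) p * (4 ^ p * p.factorial) = (2 * p).factorial := by
  induction p with
  | zero => simp
  | succ p ih =>
    rw [show 2 * (p + 1) = 2 * p + 1 + 1 by ring, Nat.factorial_succ, Nat.factorial_succ,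
      Nat.factorial_succ, poch_succ]
    push_cast
    rw [← ih]
    ring

theorem Gamma_ne_zero_of_forall_add_natCast_ne_zero {a : ℝ} (ha : ∀ i : ℕ, a + i ≠ 0) :
    Real.Gamma a ≠ 0 :=
  Real.Gamma_ne_zero fun i h ↦ ha i (by rw [h, neg_add_cancel])

theorem poch_eq_Gamma_div_Gamma {a : ℝ} (ha : ∀ i : ℕ, a + i ≠ 0) (j : ℕ) :
    poch a j = Real.Gamma (a + j) / Real.Gamma a := by
  have hΓ := Gamma_ne_zero_of_forall_add_natCast_ne_zero ha
  induction j with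
  | zero => simp [hΓ]
  | succ j ih =>
    rw [poch_succ, ih, Nat.cast_succ, ← add_assoc, Real.Gamma_add_one (ha j)]
    ring

end Pochhammer

section ThreeFTwo

/-- The `j`-th term `(a)_j (b)_j (c)_j / ((d)_j (e)_j j!)` of the hypergeometric series
`₃F₂(a, b, c; d, e; 1)`. -/
noncomputable def threeFTwoTerm (a b c d e : ℝ) (j : ℕ) : ℝ :=
  (poch a j * poch b j * poch c j) / (poch d j * poch e j * j.factorial)

variable (a b c d e : ℝ)

theorem threeFTwoTerm_comm (j : ℕ) :
    threeFTwoTerm a b c d e j = threeFTwoTerm b a c d e j := by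
  rw [threeFTwoTerm, threeFTwoTerm, mul_comm (poch a j)]

variable {d e} in
theorem threeFTwoTerm_succ (hd : ∀ i : ℕ, d + i ≠ 0) (he : ∀ i : ℕ, e + i ≠ 0) (j : ℕ) :
    (j + 1) * (d + j) * (e + j) * threeFTwoTerm a b c d e (j + 1) =
      (a + j) * (b + j) * (c + j) * threeFTwoTerm a b c d e j := by
  have hdj := hd j
  have hej := he j
  have hd_poch := poch_ne_zero hd j
  have he_poch := poch_ne_zero he j
  simp only [threeFTwoTerm, poch_succ, Nat.factorial_succ]
  push_cast
  field_simp

theorem mul_threeFTwoTerm_add_two_left (j : ℕ) :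
    a * (a + 1) * threeFTwoTerm (a + 2) b c d e j =
      (a + j) * (a + j + 1) * threeFTwoTerm a b c d e j := by
  simp only [threeFTwoTerm]
  linear_combination (poch b j * poch c j / (poch d j * poch e j * j.factorial)) *
    mul_add_one_mul_poch_add_two a j

theorem mul_threeFTwoTerm_add_two_right (j : ℕ) :
    b * (b + 1) * threeFTwoTerm a (b + 2) c d e j =
      (b + j) * (b + j + 1) * threeFTwoTerm a b c d e j := by
  rw [threeFTwoTerm_comm a, threeFTwoTerm_comm a, mul_threeFTwoTerm_add_two_left]

theorem threeFTwoTerm_neg_natCast_of_lt {m j : ℕ} (h : m < j) :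
    threeFTwoTerm (-m) b c d e j = 0 := by
  simp [threeFTwoTerm, poch_neg_natCast_of_lt h]

theorem sum_range_threeFTwoTerm_neg_natCast {m N : ℕ} (h : m < N) :
    ∑ j ∈ range N, threeFTwoTerm (-m) b c d e j =
      ∑ j ∈ range (m + 1), threeFTwoTerm (-m) b c d e j := by
  refine (sum_subset (range_subset_range.mpr h) fun j _ hj ↦ ?_).symm
  exact threeFTwoTerm_neg_natCast_of_lt b c d e (by simpa using hj)

end ThreeFTwo

section Watson

/-- The certificate `G` of Zeilberger's algorithm for Watson's sum: the differences
`G (j + 1) - G j` are proportional to a combination of the terms of two sums whose upper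
parameters differ by `2`. -/
noncomputable def watsonCertificate (a b c d : ℝ) (j : ℕ) : ℝ :=
  j * (d - 1 + j) * (2 * c - 1 + j) * threeFTwoTerm a b c d (2 * c) j

theorem watsonCertificate_succ (a b : ℝ) {c d : ℝ} (hc : ∀ i : ℕ, 2 * c + i ≠ 0)
    (hd : ∀ i : ℕ, d + i ≠ 0) (j : ℕ) :
    watsonCertificate a b c d (j + 1) =
      (a + j) * (b + j) * (c + j) * threeFTwoTerm a b c d (2 * c) j := by
  rw [← threeFTwoTerm_succ a b c hd hc, watsonCertificate]
  push_cast
  ring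

theorem threeFTwoTerm_telescope {a b c d : ℝ} (hc : ∀ i : ℕ, 2 * c + i ≠ 0)
    (hd : ∀ i : ℕ, d + i ≠ 0) (habd : a + b + 3 = 2 * d) (j : ℕ) :
    a * b * ((b + 1) * (a + 1 - 2 * c) * threeFTwoTerm a (b + 2) c d (2 * c) j -
        (a + 1) * (b + 1 - 2 * c) * threeFTwoTerm (a + 2) b c d (2 * c) j) =
      2 * (a - b) * (watsonCertificate a b c d (j + 1) - watsonCertificate a b c d j) := by
  rw [watsonCertificate_succ a b hc hd, watsonCertificate]
  obtain rfl : d = (a + b + 3) / 2 := by linarith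
  linear_combination
    a * (a + 1 - 2 * c) * mul_threeFTwoTerm_add_two_right a b c ((a + b + 3) / 2) (2 * c) j -
    b * (b + 1 - 2 * c) * mul_threeFTwoTerm_add_two_left a b c ((a + b + 3) / 2) (2 * c) j

theorem sum_range_threeFTwoTerm_telescope {a b c d : ℝ} (hc : ∀ i : ℕ, 2 * c + i ≠ 0)
    (hd : ∀ i : ℕ, d + i ≠ 0) (habd : a + b + 3 = 2 * d) (N : ℕ) :
    a * b * ((b + 1) * (a + 1 - 2 * c) * ∑ j ∈ range N, threeFTwoTerm a (b + 2) c d (2 * c) j -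
        (a + 1) * (b + 1 - 2 * c) * ∑ j ∈ range N, threeFTwoTerm (a + 2) b c d (2 * c) j) =
      2 * (a - b) * watsonCertificate a b c d N := by
  have h_zero : watsonCertificate a b c d 0 = 0 := by simp [watsonCertificate]
  rw [mul_sum, mul_sum, ← sum_sub_distrib, mul_sum,
    sum_congr rfl fun j _ ↦ threeFTwoTerm_telescope hc hd habd j, ← mul_sum, sum_range_sub,
    h_zero, sub_zero]

/-- The terminating Watson sum `₃F₂(-m, m + 2ν, c; ν + 1/2, 2c; 1)`. In terms of the usual
parameters `a, b` of Watson's theorem, `a = -m` and `ν = (a + b) / 2`. -/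
noncomputable def watsonSum (c ν : ℝ) (m : ℕ) : ℝ :=
  ∑ j ∈ range (m + 1), threeFTwoTerm (-m) (m + 2 * ν) c (ν + 1 / 2) (2 * c) j

theorem watsonSum_zero (c ν : ℝ) : watsonSum c ν 0 = 1 := by
  simp [watsonSum, threeFTwoTerm]

theorem watsonSum_one {c ν : ℝ} (hc : c ≠ 0) (hν : 2 * ν + 1 ≠ 0) : watsonSum c ν 1 = 0 := by
  have h_terms : watsonSum c ν 1 = 1 - (2 * ν + 1) * c / ((ν + 1 / 2) * (2 * c)) := by
    simp only [watsonSum, threeFTwoTerm, poch, sum_range_succ, prod_range_succ, range_zero,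
      sum_empty, prod_empty, Nat.factorial, Nat.cast_zero, Nat.cast_one]
    ring
  have h_den : (ν + 1 / 2) * (2 * c) = (2 * ν + 1) * c := by ring
  rw [h_terms, h_den, div_self (mul_ne_zero hν hc), sub_self]

theorem add_one_half_add_natCast_ne_zero {x : ℝ} (hx : ∀ i : ℕ, 2 * x + i ≠ 0) (i : ℕ) :
    x + 1 / 2 + i ≠ 0 := fun h ↦
  hx (2 * i + 1) (by push_cast; linarith)

theorem mul_watsonSum_add_two {c ν : ℝ} (hc : ∀ i : ℕ, 2 * c + i ≠ 0)
    (hν : ∀ i : ℕ, 2 * ν + i ≠ 0) (m : ℕ) :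
    (2 * ν + m + 1) * (2 * c + m + 1) * watsonSum c ν (m + 2) =
      (m + 1) * (2 * ν + m + 1 - 2 * c) * watsonSum c ν m := by
  set a : ℝ := -(m + 2 : ℕ) with ha
  set b : ℝ := m + 2 * ν with hb
  have hab : a * b ≠ 0 :=
    mul_ne_zero (neg_ne_zero.mpr (by positivity)) (by rw [hb, add_comm]; exact hν m)
  have ha_two : a + 2 = -m := by rw [ha]; push_cast; ring
  have h_vanish : watsonCertificate a b c (ν + 1 / 2) (m + 3) = 0 := by
    rw [watsonCertificate, threeFTwoTerm_neg_natCast_of_lt _ _ _ _ (Nat.lt_succ_self _), mul_zero]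
  have h_upper : ∑ j ∈ range (m + 3), threeFTwoTerm a (b + 2) c (ν + 1 / 2) (2 * c) j =
      watsonSum c ν (m + 2) := by
    rw [watsonSum, ha, hb]
    push_cast
    ring_nf
  have h_lower : ∑ j ∈ range (m + 3), threeFTwoTerm (a + 2) b c (ν + 1 / 2) (2 * c) j =
      watsonSum c ν m := by
    rw [ha_two, sum_range_threeFTwoTerm_neg_natCast _ _ _ _ (by lia), watsonSum]
  have h_telescope := sum_range_threeFTwoTerm_telescope hc (add_one_half_add_natCast_ne_zero hν)
    (show a + b + 3 = 2 * (ν + 1 / 2) by linarith) (m + 3)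
  rw [h_vanish, mul_zero, h_upper, h_lower] at h_telescope
  have h_rec := (mul_eq_zero.mp h_telescope).resolve_left hab
  rw [show a = -m - 2 by linarith, hb] at h_rec
  linear_combination -h_rec

theorem watsonSum_two_mul_add_one {c ν : ℝ} (hc : ∀ i : ℕ, 2 * c + i ≠ 0)
    (hν : ∀ i : ℕ, 2 * ν + i ≠ 0) (p : ℕ) : watsonSum c ν (2 * p + 1) = 0 := by
  induction p with
  | zero => exact watsonSum_one (by simpa using hc 0) (by simpa using hν 1)
  | succ p ih =>
    have h_rec := mul_watsonSum_add_two hc hν (2 * p + 1)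
    rw [ih, mul_zero] at h_rec
    refine (mul_eq_zero.mp h_rec).resolve_left (mul_ne_zero ?_ ?_)
    · rw [add_assoc]
      exact_mod_cast hν (2 * p + 1 + 1)
    · rw [add_assoc]
      exact_mod_cast hc (2 * p + 1 + 1)

theorem watsonSum_two_mul {c ν : ℝ} (hc : ∀ i : ℕ, 2 * c + i ≠ 0)
    (hν : ∀ i : ℕ, 2 * ν + i ≠ 0) (p : ℕ) :
    watsonSum c ν (2 * p) = poch (1 / 2) p * poch (ν + 1 / 2 - c) p /
      (poch (c + 1 / 2) p * poch (ν + 1 / 2) p) := by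
  have hc_half := add_one_half_add_natCast_ne_zero hc
  have hν_half := add_one_half_add_natCast_ne_zero hν
  rw [eq_div_iff (mul_ne_zero (poch_ne_zero hc_half p) (poch_ne_zero hν_half p))]
  induction p with
  | zero => simp [watsonSum_zero]
  | succ p ih =>
    have h_rec := mul_watsonSum_add_two hc hν (2 * p)
    push_cast at h_rec
    simp only [mul_add_one, poch_succ]
    linear_combination (1 / 4) * poch (c + 1 / 2) p * poch (ν + 1 / 2) p * h_rec +
      (1 / 2 + p) * (ν + 1 / 2 - c + p) * ih

end Watson

section Gegenbauer

theorem dCoeff_self_add (α : ℝ) (k m : ℕ) :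
    dCoeff α α (k + m) k =
      poch (k + m + 2 * α + 1) k * poch (k + α + 1) m / (m.factorial * 4 ^ k * k.factorial) *
        watsonSum (k + 1 / 2) (k + α + 1 / 2) m := by
  simp only [dCoeff, watsonSum, threeFTwoTerm, Nat.add_sub_cancel_left, pow_mul]
  push_cast
  ring_nf

theorem two_mul_natCast_add_one_half_add_ne_zero {α : ℝ} (hα : ∀ i : ℕ, 2 * α + 1 + i ≠ 0)
    (k i : ℕ) : 2 * (k + α + 1 / 2) + i ≠ 0 := fun h ↦
  hα (2 * k + i) (by push_cast; linarith)

theorem dCoeff_self_add_two_mul_add_one {α : ℝ} (hα : ∀ i : ℕ, 2 * α + 1 + i ≠ 0) (k p : ℕ) :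
    dCoeff α α (k + (2 * p + 1)) k = 0 := by
  rw [dCoeff_self_add, watsonSum_two_mul_add_one (fun i ↦ by positivity)
    (two_mul_natCast_add_one_half_add_ne_zero hα k), mul_zero]

theorem dCoeff_self_add_two_mul {α : ℝ} (hα : ∀ i : ℕ, 2 * α + 1 + i ≠ 0) (k p : ℕ) :
    dCoeff α α (k + 2 * p) k =
      poch (k + 2 * p + 2 * α + 1) k * poch (k + α + 1) (2 * p) * poch (α + 1 / 2) p /
        (4 ^ (k + p) * (k + p).factorial * p.factorial * poch (k + α + 1) p) := by
  have h_half := poch_ne_zero (a := 1 / 2) (fun i ↦ by positivity) p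
  rw [dCoeff_self_add, watsonSum_two_mul (fun i ↦ by positivity)
    (two_mul_natCast_add_one_half_add_ne_zero hα k), ← factorial_mul_poch_natCast_add_one,
    ← poch_one_half_mul_four_pow_mul_factorial, show (k : ℝ) + 1 / 2 + 1 / 2 = k + 1 by ring,
    show (k : ℝ) + α + 1 / 2 + 1 / 2 = k + α + 1 by ring,
    show (k : ℝ) + α + 1 - (k + 1 / 2) = α + 1 / 2 by ring]
  push_cast
  rw [pow_add]
  field_simp

theorem Gamma_two_mul_natCast_add_mul_sqrt_pi (α : ℝ) (q : ℕ) :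
    Real.Gamma (2 * q + 2 * α + 1) * √Real.pi =
      2 ^ (2 * α) * 4 ^ q * Real.Gamma (q + α + 1 / 2) * Real.Gamma (q + α + 1) := by
  have h_dup := Real.Gamma_mul_Gamma_add_half (q + α + 1 / 2)
  have h_pow : (2 : ℝ) ^ (1 - 2 * (q + α + 1 / 2)) = (2 ^ (2 * α) * 4 ^ q)⁻¹ := by
    rw [show 1 - 2 * (q + α + 1 / 2) = -(2 * α + (2 * q : ℕ)) by push_cast; ring,
      Real.rpow_neg zero_le_two, Real.rpow_add two_pos, Real.rpow_natCast, pow_mul]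
    norm_num
  rw [h_pow, show 2 * ((q : ℝ) + α + 1 / 2) = 2 * q + 2 * α + 1 by ring,
    show (q : ℝ) + α + 1 / 2 + 1 / 2 = q + α + 1 by ring] at h_dup
  have h_two : (2 : ℝ) ^ (2 * α) ≠ 0 := by positivity
  rw [mul_assoc _ (Real.Gamma _), h_dup]
  field_simp

theorem dCoeff_self_add_two_mul_eq_Gamma {α : ℝ} (hα : ∀ i : ℕ, 2 * α + 1 + i ≠ 0) (k p : ℕ) :
    dCoeff α α (k + 2 * p) k =
      2 ^ (2 * α) * Real.Gamma (k + 2 * p + α + 1) * Real.Gamma (k + p + α + 1 / 2) *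
          Real.Gamma (p + α + 1 / 2) /
        (√Real.pi * Real.Gamma (k + 2 * p + 2 * α + 1) * Real.Gamma (k + p + 1) *
          Real.Gamma (p + 1) * Real.Gamma (α + 1 / 2)) := by
  have hn (i : ℕ) : (k : ℝ) + 2 * p + 2 * α + 1 + i ≠ 0 := fun h ↦
    hα (k + 2 * p + i) (by push_cast; linarith)
  have hk (i : ℕ) : (k : ℝ) + α + 1 + i ≠ 0 := fun h ↦
    hα (2 * k + 2 * i + 1) (by push_cast; linarith)
  have hkp (i : ℕ) : (k : ℝ) + p + α + 1 + i ≠ 0 := fun h ↦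
    hk (p + i) (by push_cast; linarith)
  have h_half (i : ℕ) : α + 1 / 2 + i ≠ 0 := fun h ↦
    hα (2 * i) (by push_cast; linarith)
  have hΓn := Gamma_ne_zero_of_forall_add_natCast_ne_zero hn
  have hΓk := Gamma_ne_zero_of_forall_add_natCast_ne_zero hk
  have hΓkp := Gamma_ne_zero_of_forall_add_natCast_ne_zero hkp
  have h_dup := Gamma_two_mul_natCast_add_mul_sqrt_pi α (k + p)
  have h_factorial := Real.Gamma_nat_eq_factorial (k + p)
  push_cast at h_dup h_factorial
  rw [dCoeff_self_add_two_mul hα, poch_eq_Gamma_div_Gamma hn, poch_eq_Gamma_div_Gamma hk,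
    poch_eq_Gamma_div_Gamma hk, poch_eq_Gamma_div_Gamma h_half, h_factorial,
    Real.Gamma_nat_eq_factorial p,
    show (k : ℝ) + 2 * p + 2 * α + 1 + k = 2 * (k + p) + 2 * α + 1 by ring,
    show (k : ℝ) + α + 1 + (2 * p : ℕ) = k + 2 * p + α + 1 by push_cast; ring,
    show (k : ℝ) + α + 1 + p = k + p + α + 1 by ring,
    show α + 1 / 2 + p = p + α + 1 / 2 by ring]
  have h_pi : √Real.pi ≠ 0 := by positivity
  rw [← eq_div_iff h_pi] at h_dup
  rw [h_dup]
  field_simp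

theorem dCoeff_gegenbauer_closed_form_general
    {α : ℝ} (hα : ∀ i : ℕ, 2 * α + 1 + i ≠ 0) {n k : ℕ} (hk : k ≤ n) :
    ((n - k) % 2 = 0 →
      dCoeff α α n k =
        (2 : ℝ) ^ (2 * α) * Real.Gamma ((n : ℝ) + α + 1) *
            Real.Gamma (((k : ℝ) + n + 1) / 2 + α) * Real.Gamma (((n : ℝ) - k + 1) / 2 + α) /
          (Real.sqrt Real.pi * Real.Gamma ((n : ℝ) + 2 * α + 1) *
            Real.Gamma (((k : ℝ) + n) / 2 + 1) * Real.Gamma (((n : ℝ) - k) / 2 + 1) *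
            Real.Gamma (α + 1 / 2))) ∧
    ((n - k) % 2 = 1 → dCoeff α α n k = 0) := by
  refine ⟨fun h_even ↦ ?_, fun h_odd ↦ ?_⟩
  · obtain ⟨p, rfl⟩ : ∃ p, n = k + 2 * p := ⟨(n - k) / 2, by lia⟩
    rw [dCoeff_self_add_two_mul_eq_Gamma hα]
    push_cast
    ring_nf
  · obtain ⟨p, rfl⟩ : ∃ p, n = k + (2 * p + 1) := ⟨(n - k) / 2, by lia⟩
    exact dCoeff_self_add_two_mul_add_one hα k p

theorem two_mul_add_one_add_natCast_ne_zero {α : ℝ} (hα : -1 < α) (hα' : α ≠ -1 / 2) (i : ℕ) :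
    2 * α + 1 + i ≠ 0 := by
  intro h
  rcases i with _ | i
  · exact hα' (by push_cast at h; linarith)
  · push_cast at h
    linarith [i.cast_nonneg (α := ℝ)]

end Gegenbauer

/-- closed form of `d_{k,n}` in the ultraspherical case `α = β` (`α > -1`,
`α ≠ -1/2`): a ratio of Gamma functions when `n - k` is even, and `0` when `n - k` is odd. -/
theorem dCoeff_gegenbauer_closed_form
    (α : ℝ) (hα : -1 < α) (hα' : α ≠ -1/2) (n k : ℕ) (hk0 : 0 ≤ k) (hk : k ≤ n) :
    ((n - k) % 2 = 0 →
      dCoeff α α n k =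
        (2 : ℝ) ^ (2 * α) * Real.Gamma ((n : ℝ) + α + 1) *
            Real.Gamma (((k : ℝ) + n + 1) / 2 + α) * Real.Gamma (((n : ℝ) - k + 1) / 2 + α) /
          (Real.sqrt Real.pi * Real.Gamma ((n : ℝ) + 2 * α + 1) *
            Real.Gamma (((k : ℝ) + n) / 2 + 1) * Real.Gamma (((n : ℝ) - k) / 2 + 1) *
            Real.Gamma (α + 1 / 2))) ∧
    ((n - k) % 2 = 1 → dCoeff α α n k = 0) :=
  dCoeff_gegenbauer_closed_form_general (two_mul_add_one_add_natCast_ne_zero hα hα') hk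
end

section
/- Let α, β > −1 with α > β and α + β ≥ −1, let ρ ≥ 1 and let n ≥ 1 be an integer. Then for every z on the Bernstein ellipse E_ρ, |P_n^{(α,β)}(z)| ≤ P_n^{(α,β)}((ρ + ρ⁻¹)/2), and equality holds if and only if z = (ρ + ρ⁻¹)/2, i.e. the maximum of |P_n^{(α,β)}| over E_ρ is attained uniquely at the right endpoint of the major axis. -/
open Finset

open Polynomial

/-!
For `u ≠ 0` the product `(4u)ⁿ P_n((u + u⁻¹)/2)` is a polynomial `Q(u)` of degree at most `2n`,
namely `∑ binom(n+α, m) binom(n+β, k) (u-1)^(2k) (u+1)^(2m)` over `k + m = n`. Once all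
coefficients of `Q` up to degree `2n` are known to be positive, `|Q(u)| ≤ Q(|u|)` is the triangle
inequality, and its equality case for the first two terms already forces `u = |u|`.

For positivity, the constant coefficient of `Q` is `binom(2n+α+β, n)` by Chu–Vandermonde. Jacobi's
differential equation, rewritten in the variable `u`, gives a three-term recurrence for the
coefficients all of whose factors have the right sign up to degree `n`; the remaining coefficients
are covered by the palindromic symmetry of `Q`, which expresses the invariance of `(u + u⁻¹)/2`
under `u ↦ u⁻¹`.
-/

section NonnegCoeff

variable {A : Type*} [NormedRing A] [NormedAlgebra ℝ A] [NormOneClass A]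

lemma norm_aeval_le_eval_norm {P : ℝ[X]} (hP : ∀ j, 0 ≤ P.coeff j) (u : A) :
    ‖aeval u P‖ ≤ P.eval ‖u‖ := by
  rw [aeval_eq_sum_range, eval_eq_sum_range]
  refine norm_sum_le_of_le _ fun j _ ↦ ?_
  rw [norm_smul, Real.norm_of_nonneg (hP j)]
  exact mul_le_mul_of_nonneg_left (norm_pow_le u j) (hP j)

lemma eq_algebraMap_norm_of_le_norm_add [StrictConvexSpace ℝ A] {a b : ℝ} (ha : 0 < a)
    (hb : 0 < b) {u : A} (h : a + b * ‖u‖ ≤ ‖algebraMap ℝ A a + b • u‖) :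
    u = algebraMap ℝ A ‖u‖ := by
  have norm_a : ‖a • (1 : A)‖ = a := by
    rw [norm_smul, norm_one, mul_one, Real.norm_of_nonneg ha.le]
  have norm_bu : ‖b • u‖ = b * ‖u‖ := by rw [norm_smul, Real.norm_of_nonneg hb.le]
  rw [Algebra.algebraMap_eq_smul_one] at h ⊢
  have same_ray : SameRay ℝ (a • (1 : A)) (b • u) := by
    refine sameRay_iff_norm_add.mpr (le_antisymm (norm_add_le _ _) ?_)
    rwa [norm_a, norm_bu]
  have same_ray_one : SameRay ℝ 1 u := by
    simpa only [inv_smul_smul₀ ha.ne', inv_smul_smul₀ hb.ne'] using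
      (same_ray.pos_smul_left (inv_pos.mpr ha)).pos_smul_right (inv_pos.mpr hb)
  simpa only [norm_one, one_smul] using sameRay_iff_norm_smul_eq.mp same_ray_one

lemma eq_algebraMap_norm_of_eval_norm_le [StrictConvexSpace ℝ A] {P : ℝ[X]}
    (hP : ∀ j, 0 ≤ P.coeff j) (h0 : 0 < P.coeff 0) (h1 : 0 < P.coeff 1) {u : A}
    (h : P.eval ‖u‖ ≤ ‖aeval u P‖) : u = algebraMap ℝ A ‖u‖ := by
  set R := P.divX.divX with hR
  have P_eq : P = C (P.coeff 0) + C (P.coeff 1) * X + X ^ 2 * R := by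
    have hPdivX := X_mul_divX_add P
    have hdivX := X_mul_divX_add P.divX
    rw [coeff_divX, zero_add, ← hR] at hdivX
    linear_combination -hPdivX - X * hdivX
  have tail_le : ‖u ^ 2 * aeval u R‖ ≤ ‖u‖ ^ 2 * R.eval ‖u‖ := by
    refine (norm_mul_le _ _).trans (mul_le_mul (norm_pow_le u 2) ?_ (norm_nonneg _) (by positivity))
    exact norm_aeval_le_eval_norm (fun j ↦ by simpa [hR, coeff_divX] using hP (j + 1 + 1)) u
  have eval_eq : P.eval ‖u‖ = P.coeff 0 + P.coeff 1 * ‖u‖ + ‖u‖ ^ 2 * R.eval ‖u‖ := by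
    conv_lhs => rw [P_eq]
    simp
  have aeval_eq : aeval u P = algebraMap ℝ A (P.coeff 0) + P.coeff 1 • u + u ^ 2 * aeval u R := by
    conv_lhs => rw [P_eq]
    simp [Algebra.smul_def]
  refine eq_algebraMap_norm_of_le_norm_add h0 h1 ?_
  have triangle := norm_add_le (algebraMap ℝ A (P.coeff 0) + P.coeff 1 • u) (u ^ 2 * aeval u R)
  rw [← aeval_eq] at triangle
  linarith

end NonnegCoeff

section Palindrome

variable {R : Type*}

lemma reflect_pow_of_natDegree_le [Semiring R] {p : R[X]} {N : ℕ} (hp : p.natDegree ≤ N)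
    (k : ℕ) : reflect (N * k) (p ^ k) = reflect N p ^ k := by
  induction k with
  | zero => simp [reflect_one]
  | succ k ih =>
    have hpk : (p ^ k).natDegree ≤ N * k := by
      rw [mul_comm]; exact natDegree_pow_le_of_le k hp
    rw [pow_succ, mul_add_one, reflect_mul _ _ hpk hp, ih, pow_succ]

variable [CommRing R]

lemma reflect_X_sub_one_sq : reflect 2 ((X - 1 : R[X]) ^ 2) = (X - 1) ^ 2 := by
  have reflect_X_sub_one : reflect 1 (X - 1 : R[X]) = -(X - 1) := by
    rw [reflect_sub, reflect_one_X, reflect_one]; ring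
  have := reflect_pow_of_natDegree_le (p := (X - 1 : R[X])) (N := 1) (by compute_degree) 2
  rw [reflect_X_sub_one, neg_sq] at this
  exact this

lemma reflect_X_add_one_sq : reflect 2 ((X + 1 : R[X]) ^ 2) = (X + 1) ^ 2 := by
  have reflect_X_add_one : reflect 1 (X + 1 : R[X]) = X + 1 := by
    rw [reflect_add, reflect_one_X, reflect_one]; ring
  have := reflect_pow_of_natDegree_le (p := (X + 1 : R[X])) (N := 1) (by compute_degree) 2
  rw [reflect_X_add_one] at this
  exact this

lemma reflect_X_sub_one_pow_mul_X_add_one_pow (k m : ℕ) :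
    reflect (2 * (k + m)) ((X - 1 : R[X]) ^ (2 * k) * (X + 1) ^ (2 * m)) =
      (X - 1) ^ (2 * k) * (X + 1) ^ (2 * m) := by
  rw [mul_add, reflect_mul _ _ (by compute_degree) (by compute_degree), pow_mul, pow_mul,
    reflect_pow_of_natDegree_le (by compute_degree),
    reflect_pow_of_natDegree_le (by compute_degree), reflect_X_sub_one_sq, reflect_X_add_one_sq]

end Palindrome

section JacobiOperator

variable {R : Type*} [CommRing R]

/-- Jacobi's differential operator `(1-x²) y'' + (β-α-(α+β+2) x) y' + n (n+α+β+1) y`, transported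
to `Q` by the substitution `x = (X + X⁻¹)/2`, `y = Q / (4X)ⁿ` and cleared of denominators. -/
noncomputable def jacobiOperator (α β : R) (n : ℕ) : R[X] →ₗ[R] R[X] where
  toFun Q := (X ^ 3 - X) * derivative (derivative Q)
    + (C (2 * n + α + β) + C (2 * (α - β)) * X - C (2 * n - 2 - α - β) * X ^ 2) * derivative Q
    - (C (2 * (α - β) * n) + C (2 * n * (α + β + 1)) * X) * Q
  map_add' P Q := by simp only [derivative_add]; ring
  map_smul' c Q := by simp only [smul_eq_C_mul, derivative_C_mul, RingHom.id_apply]; ring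

lemma jacobiOperator_apply (α β : R) (n : ℕ) (Q : R[X]) :
    jacobiOperator α β n Q = (X ^ 3 - X) * derivative (derivative Q)
      + (C (2 * n + α + β) + C (2 * (α - β)) * X - C (2 * n - 2 - α - β) * X ^ 2) * derivative Q
      - (C (2 * (α - β) * n) + C (2 * n * (α + β + 1)) * X) * Q := rfl

lemma X_sub_C_mul_derivative_pow (c : R) (p : ℕ) :
    (X - C c) * derivative ((X - C c) ^ p) = (p : R[X]) * (X - C c) ^ p := by
  cases p with
  | zero => simp
  | succ p => rw [derivative_X_sub_C_pow, Nat.add_sub_cancel, map_natCast, pow_succ]; ring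

lemma X_sq_sub_one_mul_derivative (p q : ℕ) :
    (X ^ 2 - 1) * derivative ((X - 1 : R[X]) ^ p * (X + 1) ^ q) =
      ((p : R[X]) * (X + 1) + (q : R[X]) * (X - 1)) * ((X - 1) ^ p * (X + 1) ^ q) := by
  have hp := X_sub_C_mul_derivative_pow (1 : R) p
  have hq := X_sub_C_mul_derivative_pow (-1 : R) q
  rw [C_1] at hp
  rw [C_neg, C_1, sub_neg_eq_add] at hq
  rw [derivative_mul]
  linear_combination (X + 1) * (X + 1) ^ q * hp + (X - 1) * (X - 1) ^ p * hq

lemma X_sq_sub_one_mul_jacobiOperator (α β : R) (k m : ℕ) :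
    (X ^ 2 - 1) * jacobiOperator α β (k + m) ((X - 1) ^ (2 * k) * (X + 1) ^ (2 * m)) =
      (4 * k * (k + α)) • ((X - 1) ^ (2 * k) * (X + 1) ^ (2 * (m + 1)))
        - (4 * m * (m + β)) • ((X - 1) ^ (2 * (k + 1)) * (X + 1) ^ (2 * m)) := by
  have first := X_sq_sub_one_mul_derivative (R := R) (2 * k) (2 * m)
  have right_factor : ((X - 1 : R[X]) ^ (2 * k) * (X + 1) ^ (2 * (m + 1))) =
      (X + 1) ^ 2 * ((X - 1) ^ (2 * k) * (X + 1) ^ (2 * m)) := by ring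
  have left_factor : ((X - 1 : R[X]) ^ (2 * (k + 1)) * (X + 1) ^ (2 * m)) =
      (X - 1) ^ 2 * ((X - 1) ^ (2 * k) * (X + 1) ^ (2 * m)) := by ring
  rw [right_factor, left_factor, jacobiOperator_apply]
  generalize (X - 1 : R[X]) ^ (2 * k) * (X + 1) ^ (2 * m) = e at first ⊢
  have second : (X ^ 2 - 1) * derivative (derivative e) + 2 * X * derivative e =
      (2 * (k : R[X]) + 2 * (m : R[X])) * e
        + (2 * (k : R[X]) * (X + 1) + 2 * (m : R[X]) * (X - 1)) * derivative e := by
    have := congrArg derivative first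
    simp only [derivative_mul, derivative_sub, derivative_add, derivative_X_pow, derivative_X,
      derivative_one, derivative_natCast] at this
    push_cast [C_ofNat] at this
    linear_combination this
  push_cast at first
  simp only [smul_eq_C_mul, C_add, C_sub, C_mul, C_1, Nat.cast_add, map_natCast, C_ofNat]
  linear_combination (X ^ 3 - X) * second + (C α + C β + 2 * (C α - C β) * X
    + (C α + C β) * X ^ 2 + 2 * (k : R[X]) * (1 + X) + 2 * (m : R[X]) * (1 - X)) * first

lemma coeff_X_mul_derivative (P : R[X]) (i : ℕ) :
    (X * derivative P).coeff i = i * P.coeff i := by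
  cases i with
  | zero => simp
  | succ i => rw [coeff_X_mul, coeff_derivative]; push_cast; ring

variable {α β : R} {n : ℕ} {Q : R[X]}

lemma coeff_one_of_jacobiOperator_eq_zero (hQ : jacobiOperator α β n Q = 0) :
    (2 * n + α + β) * Q.coeff 1 = 2 * (α - β) * n * Q.coeff 0 := by
  have h := congrArg (eval 0) hQ
  simp only [jacobiOperator_apply, eval_add, eval_sub, eval_mul, eval_pow, eval_X, eval_C,
    eval_zero] at h
  simp only [← coeff_zero_eq_eval_zero, coeff_derivative] at h
  push_cast at h
  linear_combination h

lemma coeff_add_two_of_jacobiOperator_eq_zero (hQ : jacobiOperator α β n Q = 0) (i : ℕ) :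
    (i + 2) * (2 * n + α + β - 1 - i) * Q.coeff (i + 2) =
      2 * (α - β) * (n - i - 1) * Q.coeff (i + 1) +
        (2 * n - i) * (i + (α + β + 1)) * Q.coeff i := by
  have euler_form : jacobiOperator α β n Q =
      X * (X * derivative (X * derivative Q) - X * derivative Q) - X * derivative (derivative Q)
      + C (2 * n + α + β) * derivative Q + C (2 * (α - β)) * (X * derivative Q)
      - C (2 * n - 2 - α - β) * (X * (X * derivative Q))
      - C (2 * (α - β) * n) * Q - C (2 * n * (α + β + 1)) * (X * Q) := by
    rw [jacobiOperator_apply, derivative_mul, derivative_X]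
    ring
  have h := congrArg (coeff · (i + 1)) (euler_form.symm.trans hQ)
  simp only [coeff_add, coeff_sub, coeff_C_mul, coeff_X_mul_derivative, coeff_X_mul,
    coeff_derivative, coeff_zero] at h
  push_cast at h
  linear_combination h

end JacobiOperator

section Gbinom

lemma gbinom_eq_choose (a : ℝ) (m : ℕ) : gbinom a m = Ring.choose a m := by
  rw [Ring.choose_eq_smul, gbinom, ← aeval_eq_smeval, aeval_def, eval₂_eq_eval_map,
    descPochhammer_map, descPochhammer_eval_eq_prod_range, smul_eq_mul, inv_mul_eq_div]

lemma gbinom_pos {a : ℝ} {m : ℕ} (h : (m : ℝ) < a + 1) : 0 < gbinom a m := by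
  refine div_pos (prod_pos fun i hi ↦ ?_) (by positivity)
  have : (i : ℝ) + 1 ≤ m := by exact_mod_cast mem_range.mp hi
  linarith

lemma gbinom_succ_mul (a : ℝ) (m : ℕ) : gbinom a (m + 1) * (m + 1) = gbinom a m * (a - m) := by
  rw [gbinom, gbinom, prod_range_succ, Nat.factorial_succ]
  push_cast
  field_simp

lemma gbinom_mul_gbinom_succ (α β : ℝ) (k m : ℕ) :
    gbinom ((k + m + 1 : ℕ) + α) m * gbinom ((k + m + 1 : ℕ) + β) (k + 1) *
        ((k + 1) * (k + 1 + α)) =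
      gbinom ((k + m + 1 : ℕ) + α) (m + 1) * gbinom ((k + m + 1 : ℕ) + β) k *
        ((m + 1) * (m + 1 + β)) := by
  have hα := gbinom_succ_mul ((k + m + 1 : ℕ) + α) m
  have hβ := gbinom_succ_mul ((k + m + 1 : ℕ) + β) k
  push_cast at hα hβ ⊢
  linear_combination gbinom (k + m + 1 + α) m * (k + 1 + α) * hβ
    - gbinom (k + m + 1 + β) k * (m + 1 + β) * hα

lemma sum_antidiagonal_gbinom_mul_gbinom (a b : ℝ) (n : ℕ) :
    ∑ p ∈ antidiagonal n, gbinom a p.1 * gbinom b p.2 = gbinom (a + b) n := by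
  simp only [gbinom_eq_choose]
  exact (Ring.add_choose_eq n (Commute.all a b)).symm

end Gbinom

section JacobiNumerator

variable {α β : ℝ} {n : ℕ}

/-- The polynomial `Q` with `Q(u) = (4u)ⁿ P_n^{(α,β)}((u + u⁻¹)/2)` for `u ≠ 0`. A pair `p` in the
antidiagonal stands for `(k, n - k)`. -/
noncomputable def jacobiNumerator (α β : ℝ) (n : ℕ) : ℝ[X] :=
  ∑ p ∈ antidiagonal n, (gbinom (n + α) p.2 * gbinom (n + β) p.1) •
    ((X - 1) ^ (2 * p.1) * (X + 1) ^ (2 * p.2))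

lemma aeval_jacobiNumerator (α β : ℝ) (n : ℕ) {u : ℂ} (hu : u ≠ 0) :
    aeval u (jacobiNumerator α β n) = (4 * u) ^ n * jacobiC α β n ((u + u⁻¹) / 2) := by
  have sub_one : (u + u⁻¹) / 2 - 1 = (u - 1) ^ 2 / (2 * u) := by field_simp; ring
  have add_one : (u + u⁻¹) / 2 + 1 = (u + 1) ^ 2 / (2 * u) := by field_simp; ring
  rw [jacobiNumerator, jacobiC, sub_one, add_one,
    Nat.sum_antidiagonal_eq_sum_range_succ_mk, map_sum, ← mul_assoc, mul_sum]
  refine sum_congr rfl fun k hk ↦ ?_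
  have scale : (4 * u) ^ n * (1 / 2 ^ n) = (2 * u) ^ k * (2 * u) ^ (n - k) := by
    rw [← pow_add, Nat.add_sub_cancel' (mem_range_succ_iff.mp hk), ← one_div_pow, ← mul_pow]
    ring
  rw [scale]
  simp only [map_smul, map_mul, map_pow, map_sub, map_add, aeval_X, map_one, Complex.real_smul,
    div_pow, pow_mul]
  field_simp

lemma jacobiC_ofReal (α β : ℝ) (n : ℕ) (x : ℝ) : jacobiC α β n x = jacobiP α β n x := by
  simp [jacobiC, jacobiP]

lemma eval_jacobiNumerator (α β : ℝ) (n : ℕ) {ρ : ℝ} (hρ : ρ ≠ 0) :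
    (jacobiNumerator α β n).eval ρ = (4 * ρ) ^ n * jacobiP α β n ((ρ + ρ⁻¹) / 2) := by
  have h := aeval_jacobiNumerator α β n (Complex.ofReal_ne_zero.mpr hρ)
  rw [← Complex.coe_algebraMap, aeval_algebraMap_apply_eq_algebraMap_eval,
    Complex.coe_algebraMap] at h
  rw [← Complex.ofReal_inj, h, Complex.ofReal_mul, ← jacobiC_ofReal]
  push_cast
  rfl

lemma jacobiOperator_jacobiNumerator (α β : ℝ) (n : ℕ) :
    jacobiOperator α β n (jacobiNumerator α β n) = 0 := by
  have hX : (X ^ 2 - 1 : ℝ[X]) ≠ 0 := (monic_X_pow_sub_C 1 two_ne_zero).ne_zero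
  refine (mul_eq_zero.mp ?_).resolve_left hX
  have telescope : (X ^ 2 - 1) * jacobiOperator α β n (jacobiNumerator α β n) =
      ∑ p ∈ antidiagonal n, (gbinom (n + α) p.2 * gbinom (n + β) p.1 * (4 * p.1 * (p.1 + α))) •
          ((X - 1) ^ (2 * p.1) * (X + 1) ^ (2 * (p.2 + 1)))
        - ∑ p ∈ antidiagonal n, (gbinom (n + α) p.2 * gbinom (n + β) p.1 * (4 * p.2 * (p.2 + β))) •
          ((X - 1) ^ (2 * (p.1 + 1)) * (X + 1) ^ (2 * p.2)) := by
    rw [jacobiNumerator, map_sum, mul_sum, ← sum_sub_distrib]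
    refine sum_congr rfl fun p hp ↦ ?_
    have h := X_sq_sub_one_mul_jacobiOperator α β p.1 p.2
    rw [mem_antidiagonal.mp hp] at h
    rw [map_smul, mul_smul_comm, h, smul_sub, smul_smul, smul_smul]
  rw [telescope, sub_eq_zero]
  cases n with
  | zero => simp
  | succ n =>
    rw [Nat.sum_antidiagonal_succ, Nat.sum_antidiagonal_succ']
    simp only [Nat.cast_zero, mul_zero, zero_mul, zero_smul, zero_add]
    refine sum_congr rfl fun p hp ↦ ?_
    obtain rfl := mem_antidiagonal.mp hp
    have h := gbinom_mul_gbinom_succ α β p.1 p.2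
    congr 1
    push_cast at h ⊢
    linear_combination 4 * h

lemma reflect_jacobiNumerator (α β : ℝ) (n : ℕ) :
    reflect (2 * n) (jacobiNumerator α β n) = jacobiNumerator α β n := by
  ext j
  simp only [jacobiNumerator, coeff_reflect, finsetSum_coeff, coeff_smul]
  refine sum_congr rfl fun p hp ↦ ?_
  rw [← coeff_reflect, ← mem_antidiagonal.mp hp, reflect_X_sub_one_pow_mul_X_add_one_pow]

lemma natDegree_jacobiNumerator_le (α β : ℝ) (n : ℕ) :
    (jacobiNumerator α β n).natDegree ≤ 2 * n := by
  refine natDegree_sum_le_of_forall_le _ _ fun p hp ↦ (natDegree_smul_le _ _).trans ?_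
  rw [← mem_antidiagonal.mp hp, mul_add]
  compute_degree

lemma coeff_zero_jacobiNumerator (α β : ℝ) (n : ℕ) :
    (jacobiNumerator α β n).coeff 0 = gbinom (2 * n + α + β) n := by
  rw [show 2 * (n : ℝ) + α + β = (n + β) + (n + α) by ring, ← sum_antidiagonal_gbinom_mul_gbinom,
    coeff_zero_eq_eval_zero, jacobiNumerator, eval_finsetSum]
  simp [mul_comm]

lemma coeff_zero_jacobiNumerator_pos (hsum : -1 ≤ α + β) : 0 < (jacobiNumerator α β n).coeff 0 := by
  rw [coeff_zero_jacobiNumerator]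
  rcases n.eq_zero_or_pos with rfl | hn
  · simp [gbinom]
  · have : (1 : ℝ) ≤ n := by exact_mod_cast hn
    exact gbinom_pos (by linarith)

lemma coeff_jacobiNumerator_pos_of_le (hab : β < α) (hsum : -1 ≤ α + β) {j : ℕ} (hj : j ≤ n) :
    0 < (jacobiNumerator α β n).coeff j := by
  have hQ := jacobiOperator_jacobiNumerator α β n
  have : 0 < α - β := sub_pos.mpr hab
  have : 0 ≤ α + β + 1 := by linarith
  induction j using Nat.twoStepInduction with
  | zero => exact coeff_zero_jacobiNumerator_pos hsum
  | one =>
    have hn : (1 : ℝ) ≤ n := by exact_mod_cast hj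
    have coeff_zero_pos := coeff_zero_jacobiNumerator_pos (n := n) hsum
    have rhs_pos : 0 < 2 * (α - β) * n * (jacobiNumerator α β n).coeff 0 := by positivity
    rw [← coeff_one_of_jacobiOperator_eq_zero hQ] at rhs_pos
    exact pos_of_mul_pos_right rhs_pos (by linarith)
  | more i ih₀ ih₁ =>
    specialize ih₀ (by omega)
    specialize ih₁ (by omega)
    have hi : (i : ℝ) + 2 ≤ n := by exact_mod_cast hj
    have : (0 : ℝ) ≤ i := i.cast_nonneg
    have rhs_pos : 0 < 2 * (α - β) * (n - i - 1) * (jacobiNumerator α β n).coeff (i + 1) +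
        (2 * n - i) * (i + (α + β + 1)) * (jacobiNumerator α β n).coeff i := by
      have : (0 : ℝ) < n - i - 1 := by linarith
      have : (0 : ℝ) ≤ 2 * n - i := by linarith
      positivity
    rw [← coeff_add_two_of_jacobiOperator_eq_zero hQ i] at rhs_pos
    exact pos_of_mul_pos_right rhs_pos (mul_nonneg (by linarith) (by linarith))

lemma coeff_jacobiNumerator_nonneg (hab : β < α) (hsum : -1 ≤ α + β) (j : ℕ) :
    0 ≤ (jacobiNumerator α β n).coeff j := by
  rcases le_or_gt j n with hjn | hnj
  · exact (coeff_jacobiNumerator_pos_of_le hab hsum hjn).le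
  rcases le_or_gt j (2 * n) with hj | hj
  · rw [← reflect_jacobiNumerator, coeff_reflect, revAt_le hj]
    exact (coeff_jacobiNumerator_pos_of_le hab hsum (by omega)).le
  · exact (coeff_eq_zero_of_natDegree_lt ((natDegree_jacobiNumerator_le α β n).trans_lt hj)).ge

end JacobiNumerator

theorem jacobi_max_at_right_endpoint_general {α β ρ : ℝ} {n : ℕ} (hab : β < α)
    (hsum : -1 ≤ α + β) (hρ : 0 < ρ) (hn : 1 ≤ n) :
    ∀ z ∈ bernsteinEllipse ρ,
      ‖jacobiC α β n z‖ ≤ jacobiP α β n ((ρ + ρ⁻¹) / 2) ∧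
      (‖jacobiC α β n z‖ = jacobiP α β n ((ρ + ρ⁻¹) / 2) ↔
        z = (((ρ + ρ⁻¹) / 2 : ℝ) : ℂ)) := by
  rintro z ⟨u, rfl, rfl⟩
  set ρ := ‖u‖
  have hQ := coeff_jacobiNumerator_nonneg (n := n) hab hsum
  have hC := congrArg norm (aeval_jacobiNumerator α β n (norm_pos_iff.mp hρ))
  rw [norm_mul, norm_pow, norm_mul, Complex.norm_ofNat] at hC
  have hP := eval_jacobiNumerator α β n hρ.ne'
  have hscale : 0 < (4 * ρ) ^ n := by positivity
  have norm_le : ‖jacobiC α β n ((u + u⁻¹) / 2)‖ ≤ jacobiP α β n ((ρ + ρ⁻¹) / 2) := by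
    refine le_of_mul_le_mul_left ?_ hscale
    rw [← hC, ← hP]
    exact norm_aeval_le_eval_norm hQ u
  refine ⟨norm_le, fun heq ↦ ?_, fun heq ↦ ?_⟩
  · have hu : u = (ρ : ℂ) := by
      refine eq_algebraMap_norm_of_eval_norm_le hQ
        (coeff_jacobiNumerator_pos_of_le hab hsum n.zero_le)
        (coeff_jacobiNumerator_pos_of_le hab hsum hn) ?_
      rw [hC, hP, heq]
    rw [hu]
    push_cast
    rfl
  · rw [heq, jacobiC_ofReal, Complex.norm_of_nonneg ((norm_nonneg _).trans norm_le)]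

/-- if `α > β` and `α + β ≥ -1`, then the maximum of `|P_n^{(α,β)}|` over the
Bernstein ellipse `E_ρ` is attained uniquely at the right endpoint `(ρ + ρ⁻¹)/2` of the
major axis. -/
theorem jacobi_max_at_right_endpoint
    (α β : ℝ) (hα : -1 < α) (hβ : -1 < β) (hab : β < α) (hsum : -1 ≤ α + β)
    (ρ : ℝ) (hρ : 1 ≤ ρ) (n : ℕ) (hn : 1 ≤ n) :
    ∀ z ∈ bernsteinEllipse ρ,
      ‖jacobiC α β n z‖ ≤ jacobiP α β n ((ρ + ρ⁻¹) / 2) ∧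
      (‖jacobiC α β n z‖ = jacobiP α β n ((ρ + ρ⁻¹) / 2) ↔
        z = (((ρ + ρ⁻¹) / 2 : ℝ) : ℂ)) :=
  jacobi_max_at_right_endpoint_general hab hsum (zero_lt_one.trans_le hρ) hn
end
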